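/- arXiv:1308.5081 — 2 statements merged into one kernel-verified Lean document; each statement's English description precedes it below -/
import Mathlib

section
/- Let g ∈ C²(𝕋), k ∈ ℕ with k ≥ 1, and h > 0. Then W₂(g, χ_h^k) ≤ c_k(h)·‖D²g‖, where c_k(h) = (2h²/(k+2)!)·Σ_{j=0}^{⌊k/2⌋} (-1)^j (k choose j) (k/2 - j)^{k+2}. -/
/-! The constant is `c_k(h) = k h² / 24`, half the second moment of `χ_h^k`.

*The constant.* The summand is invariant under `j ↦ k - j`, so twice the sum over `j ≤ k/2` is the
full alternating sum, which is the `k`-th central difference of `x ^ (k+2)` at `0`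
(`centralSum`, with step one). Absorption `j * C(k, j) = k * C(k-1, j-1)` gives a recursion
(`centralSum_succ`) that evaluates the central differences of `x ^ k`, `x ^ (k+1)` and
`x ^ (k+2)` successively.

*The estimate.* Write `M` for the norm of `D²g`. The symmetric second difference satisfies
`|g (t+u) + g (t-u) - 2 g t| ≤ M u²`; averaging over `|u| < h/2` yields
`|g - g * χ_h| ≤ M h² / 24` (`abs_sub_conv_chi_le`). As convolution with `χ_h` does not increase the
sup norm, associativity of convolution and the splitting
`g - (g * χ_h^k) * χ_h = (g - g * χ_h) + (g - g * χ_h^k) * χ_h`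
show by induction that each further factor `χ_h` costs at most another `M h² / 24`. -/

open MeasureTheory Real

/-- Uniform (sup) norm of a real function. -/
noncomputable def unorm (f : ℝ → ℝ) : ℝ := ⨆ u : ℝ, |f u|

/-- Convolution of two real functions. -/
noncomputable def conv (f g : ℝ → ℝ) : ℝ → ℝ := fun t => ∫ u : ℝ, f u * g (t - u)

/-- Normalized characteristic function of `(-h/2, h/2)`. -/
noncomputable def chi (h : ℝ) : ℝ → ℝ := fun t => if -h/2 < t ∧ t < h/2 then 1/h else 0

/-- Convolution powers `χ_h^k` (defined for `k ≥ 1`; junk value `0` at `k = 0`). -/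
noncomputable def chiPow (h : ℝ) : ℕ → (ℝ → ℝ)
  | 0 => fun _ => 0
  | 1 => chi h
  | (k+2) => conv (chiPow h (k+1)) (chi h)

/-- Special modulus of continuity `W₂(f, χ_h^k) = ‖f - f*χ_h^k‖`. -/
noncomputable def W2 (f : ℝ → ℝ) (h : ℝ) (k : ℕ) : ℝ :=
  unorm (fun t => f t - conv f (chiPow h k) t)

/-- `W₂*(f, χ_h^k) = sup_{0 < u ≤ h} W₂(f, χ_u^k)`. -/
noncomputable def W2star (f : ℝ → ℝ) (h : ℝ) (k : ℕ) : ℝ :=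
  ⨆ u : Set.Ioc (0:ℝ) h, W2 f u.1 k

/-- Second Peetre K-functional: infimum over twice continuously differentiable
1-periodic functions `g` of `‖f - g‖ + h² ‖D²g‖`. -/
noncomputable def K2 (f : ℝ → ℝ) (h : ℝ) : ℝ :=
  ⨅ g : {g : ℝ → ℝ // ContDiff ℝ 2 g ∧ Function.Periodic g 1},
    unorm (fun t => f t - g.1 t) + h^2 * unorm (iteratedDeriv 2 g.1)

/-- Generalized K-functional `K̃₂(f, h₁, h₂)`. -/
noncomputable def Ktilde2 (f : ℝ → ℝ) (h1 h2 : ℝ) : ℝ :=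
  ⨅ p : {p : (ℝ → ℝ) × (ℝ → ℝ) //
      (ContDiff ℝ 1 p.1 ∧ Function.Periodic p.1 1) ∧
      (ContDiff ℝ 2 p.2 ∧ Function.Periodic p.2 1)},
    unorm (fun t => f t - p.1.1 t) + h1 * unorm (deriv (fun t => p.1.1 t - p.1.2 t))
      + h2^2 * unorm (iteratedDeriv 2 p.1.2)

/-- Classical second modulus of smoothness. -/
noncomputable def omega2 (f : ℝ → ℝ) (h : ℝ) : ℝ :=
  ⨆ u : Set.Ioc (0:ℝ) h, ⨆ t : ℝ, |f (t + u.1) - 2 * f t + f (t - u.1)|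

/-- `τ` is a real 1-periodic trigonometric polynomial of degree at most `n - 1`. -/
def IsTrigPolyDegLT (n : ℕ) (τ : ℝ → ℝ) : Prop :=
  ∃ a b : ℕ → ℝ, ∀ t : ℝ, τ t =
    ∑ j ∈ Finset.range n, (a j * Real.cos (2 * Real.pi * j * t) + b j * Real.sin (2 * Real.pi * j * t))

/-- Best approximation `E_{n-1}(f)` by trigonometric polynomials of degree at most `n-1`. -/
noncomputable def bestApprox (n : ℕ) (f : ℝ → ℝ) : ℝ :=
  ⨅ τ : {τ : ℝ → ℝ // IsTrigPolyDegLT n τ}, unorm (fun t => f t - τ.1 t)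

/-! ### Central differences of powers and the constant -/

/-- The `k`-th central difference (with step `1`) of the power function `y ↦ y ^ m`, at `x`. -/
noncomputable def centralSum (k m : ℕ) (x : ℝ) : ℝ :=
  ∑ j ∈ Finset.range (k + 1), (-1 : ℝ) ^ j * (Nat.choose k j) * (x + (k : ℝ) / 2 - j) ^ m

/-- Splitting one factor `x + (k+1)/2 - j` off the power and absorbing `j` into the binomial
coefficient. -/
lemma centralSum_succ (k m : ℕ) (x : ℝ) :
    centralSum (k + 1) (m + 1) x =
      (x + ((k : ℝ) + 1) / 2) * centralSum (k + 1) m x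
        + ((k : ℝ) + 1) * centralSum k m (x - 1 / 2) := by
  have h1 : centralSum (k + 1) (m + 1) x =
      (x + ((k : ℝ) + 1) / 2) * centralSum (k + 1) m x
      - ∑ j ∈ Finset.range (k + 1 + 1), (-1 : ℝ) ^ j * ((j : ℝ) * (Nat.choose (k + 1) j)) *
          (x + ((k + 1 : ℕ) : ℝ) / 2 - j) ^ m := by
    unfold centralSum
    rw [Finset.mul_sum, ← Finset.sum_sub_distrib]
    refine Finset.sum_congr rfl fun j _ => ?_
    push_cast
    ring
  rw [h1, Finset.sum_range_succ']
  unfold centralSum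
  rw [sub_eq_add_neg]
  congr 1
  rw [Nat.cast_zero, zero_mul, mul_zero, zero_mul, add_zero, Finset.mul_sum, neg_eq_iff_eq_neg,
    ← Finset.sum_neg_distrib]
  refine Finset.sum_congr rfl fun j _ => ?_
  have h2 : ((j : ℝ) + 1) * (Nat.choose (k + 1) (j + 1)) = ((k : ℝ) + 1) * Nat.choose k j := by
    have := Nat.add_one_mul_choose_eq k j
    have h3 : ((k : ℝ) + 1) * Nat.choose k j = Nat.choose (k + 1) (j + 1) * ((j : ℝ) + 1) := by
      exact_mod_cast this
    linarith
  push_cast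
  rw [h2, pow_succ,
    show x + ((k : ℝ) + 1) / 2 - (j + 1) = x - 1 / 2 + (k : ℝ) / 2 - j by ring]
  ring

lemma centralSum_of_lt (m : ℕ) : ∀ (k : ℕ) (x : ℝ), m < k → centralSum k m x = 0 := by
  induction m with
  | zero =>
    intro k x hk
    have := @Int.alternating_sum_range_choose k
    rw [if_neg (by omega)] at this
    unfold centralSum
    simp only [pow_zero, mul_one]
    exact_mod_cast this
  | succ m ih =>
    intro k x hk
    obtain ⟨k, rfl⟩ : ∃ n, k = n + 1 := ⟨k - 1, by omega⟩
    rw [centralSum_succ, ih _ _ (by omega), ih _ _ (by omega)]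
    ring

lemma centralSum_self (k : ℕ) : ∀ x : ℝ, centralSum k k x = k.factorial := by
  induction k with
  | zero => intro x; simp [centralSum]
  | succ k ih =>
    intro x
    rw [centralSum_succ, ih, centralSum_of_lt _ _ _ (by omega), Nat.factorial_succ]
    push_cast
    ring

lemma centralSum_self_add_one (k : ℕ) :
    ∀ x : ℝ, centralSum k (k + 1) x = (k + 1).factorial * x := by
  induction k with
  | zero => intro x; simp [centralSum]
  | succ k ih =>
    intro x
    rw [centralSum_succ, ih, centralSum_self, Nat.factorial_succ (k + 1)]
    push_cast
    ring

lemma centralSum_self_add_two (k : ℕ) :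
    ∀ x : ℝ, centralSum k (k + 2) x = (k + 2).factorial * (x ^ 2 / 2 + k / 24) := by
  induction k with
  | zero => intro x; simp [centralSum]; ring
  | succ k ih =>
    intro x
    rw [centralSum_succ, ih, centralSum_self_add_one, Nat.factorial_succ (k + 2)]
    push_cast
    ring

/-- The half sum in `c_k(h)`, doubled, is the full central difference at `0`: the summand is
symmetric under `j ↦ k - j`, and the middle term (for even `k`) vanishes. -/
lemma two_mul_half_sum (k : ℕ) :
    2 * ∑ j ∈ Finset.range (k / 2 + 1),
      (-1 : ℝ) ^ j * (Nat.choose k j) * ((k : ℝ) / 2 - j) ^ (k + 2) = centralSum k (k + 2) 0 := by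
  set F : ℕ → ℝ := fun j => (-1 : ℝ) ^ j * (Nat.choose k j) * ((k : ℝ) / 2 - j) ^ (k + 2) with hF
  have hfull : centralSum k (k + 2) 0 = ∑ j ∈ Finset.range (k + 1), F j := by
    simp [centralSum, hF]
  have hsymm : ∀ j ≤ k, F (k - j) = F j := by
    intro j hj
    simp only [hF]
    rw [Nat.choose_symm hj, Nat.cast_sub hj,
      show (k : ℝ) / 2 - (k - j) = (-1) * ((k : ℝ) / 2 - j) by ring, mul_pow]
    have : (-1 : ℝ) ^ (k - j) * (-1) ^ (k + 2) = (-1) ^ j := by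
      rw [← pow_add, show k - j + (k + 2) = j + 2 * (k - j + 1) by omega, pow_add, pow_mul]
      simp
    linear_combination (Nat.choose k j : ℝ) * ((k : ℝ) / 2 - j) ^ (k + 2) * this
  have hsplit : ∑ j ∈ Finset.range (k + 1), F j =
      ∑ j ∈ Finset.range (k / 2 + 1), F j + ∑ j ∈ Finset.range (k - k / 2), F j := by
    rw [show k + 1 = (k / 2 + 1) + (k - k / 2) by omega, Finset.sum_range_add]
    congr 1
    rw [← Finset.sum_range_reflect]
    refine Finset.sum_congr rfl fun j hj => ?_
    have hj' := Finset.mem_range.1 hj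
    rw [← hsymm j (by omega)]
    congr 1
    omega
  rw [hfull, hsplit, two_mul]
  congr 1
  rcases Nat.even_or_odd' k with ⟨m, hm | hm⟩
  · have h1 : k / 2 = m := by omega
    have h2 : k - k / 2 = m := by omega
    have : F m = 0 := by simp [hF, hm]
    rw [h2, h1, Finset.sum_range_succ F, this, add_zero]
  · have h1 : k - k / 2 = k / 2 + 1 := by omega
    rw [h1]

lemma const_eq (k : ℕ) (h : ℝ) :
    2 * h ^ 2 / (Nat.factorial (k + 2)) * ∑ j ∈ Finset.range (k / 2 + 1),
      (-1 : ℝ) ^ j * (Nat.choose k j) * ((k : ℝ) / 2 - (j : ℝ)) ^ (k + 2) = k * h ^ 2 / 24 := by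
  have h1 := two_mul_half_sum k
  rw [centralSum_self_add_two] at h1
  have h2 : ((k + 2).factorial : ℝ) ≠ 0 := by positivity
  generalize ∑ j ∈ Finset.range (k / 2 + 1),
    (-1 : ℝ) ^ j * (Nat.choose k j) * ((k : ℝ) / 2 - j) ^ (k + 2) = S at h1 ⊢
  field_simp
  linear_combination 24 * h ^ 2 * h1

/-! ### One averaging step -/

/-- Taylor estimate for the symmetric second difference, by integrating the mean value bound
`|g' (t+s) - g' (t-s)| ≤ 2 M s`. -/
lemma abs_second_diff_le {g : ℝ → ℝ} (hg : ContDiff ℝ 2 g) {M : ℝ}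
    (hM : ∀ x, |iteratedDeriv 2 g x| ≤ M) (t u : ℝ) :
    |g (t + u) + g (t - u) - 2 * g t| ≤ M * u ^ 2 := by
  have hd : Differentiable ℝ g := hg.differentiable (by norm_num)
  have hd2 : Differentiable ℝ (deriv g) := by
    have : ContDiff ℝ (1 + 1) g := by simpa [one_add_one_eq_two] using hg
    exact (contDiff_succ_iff_deriv.1 this).2.2.differentiable (by norm_num)
  have key : ∀ v : ℝ, 0 ≤ v → |g (t + v) + g (t - v) - 2 * g t| ≤ M * v ^ 2 := by
    intro v hv
    have hder : ∀ s : ℝ, HasDerivAt (fun s => g (t + s) + g (t - s) - 2 * g t)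
        (deriv g (t + s) - deriv g (t - s)) s := by
      intro s
      have h1 : HasDerivAt (fun s => g (t + s)) (deriv g (t + s)) s :=
        (hd (t + s)).hasDerivAt.comp_const_add t s
      have h2 : HasDerivAt (fun s => g (t - s)) (-deriv g (t - s)) s :=
        (hd (t - s)).hasDerivAt.comp_const_sub t s
      simpa [sub_eq_add_neg] using (h1.add h2).sub_const (2 * g t)
    have hB : ∀ s : ℝ, HasDerivAt (fun s => M * s ^ 2) (2 * M * s) s := by
      intro s
      have := (hasDerivAt_pow 2 s).const_mul M
      rwa [show M * ((2 : ℕ) * s ^ (2 - 1)) = 2 * M * s by push_cast; ring] at this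
    have := image_norm_le_of_norm_deriv_right_le_deriv_boundary
      (f := fun s => g (t + s) + g (t - s) - 2 * g t) (a := 0) (b := v)
      (f' := fun s => deriv g (t + s) - deriv g (t - s))
      (fun s _ => (hder s).continuousAt.continuousWithinAt)
      (fun s _ => (hder s).hasDerivWithinAt)
      (B := fun s => M * s ^ 2) (B' := fun s => 2 * M * s)
      (by simp [two_mul]) hB ?_ (Set.right_mem_Icc.2 hv)
    · simpa using this
    · intro s hs
      have hmv := Convex.norm_image_sub_le_of_norm_deriv_le (f := deriv g) (s := Set.univ)
        (x := t - s) (y := t + s) (C := M) (fun x _ => hd2 x)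
        (fun x _ => by simpa [iteratedDeriv_succ] using hM x)
        convex_univ trivial trivial
      refine hmv.trans (le_of_eq ?_)
      rw [Real.norm_eq_abs, show t + s - (t - s) = 2 * s by ring,
        abs_of_nonneg (by linarith [hs.1])]
      ring
  rcases le_total 0 u with hu | hu
  · exact key u hu
  · have := key (-u) (by linarith)
    rw [neg_sq, sub_neg_eq_add, ← sub_eq_add_neg, add_comm (g (t - u))] at this
    exact this

/-- Convolution with `χ_h` is averaging over an interval of length `h`. -/
lemma conv_chi (f : ℝ → ℝ) {h : ℝ} (hh : 0 < h) (t : ℝ) :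
    conv f (chi h) t = 1 / h * ∫ u in (-h / 2)..(h / 2), f (t - u) := by
  have h1 : conv f (chi h) t = ∫ u, f (t - u) * chi h u := by
    unfold conv
    rw [← integral_sub_left_eq_self _ volume t]
    simp
  have h2 : (fun u => f (t - u) * chi h u) =
      (Set.Ioo (-h / 2) (h / 2)).indicator (fun u => 1 / h * f (t - u)) := by
    ext u
    by_cases hu : u ∈ Set.Ioo (-h / 2) (h / 2)
    · rw [Set.indicator_of_mem hu, chi, if_pos ⟨hu.1, hu.2⟩, mul_comm]
    · rw [Set.indicator_of_notMem hu, chi, if_neg (fun H => hu ⟨H.1, H.2⟩), mul_zero]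
  rw [h1, h2, integral_indicator measurableSet_Ioo, ← integral_Ioc_eq_integral_Ioo,
    ← intervalIntegral.integral_of_le (by linarith), intervalIntegral.integral_const_mul]

/-- The case `k = 1`. -/
lemma abs_sub_conv_chi_le {g : ℝ → ℝ} (hg : ContDiff ℝ 2 g) {M : ℝ}
    (hM : ∀ x, |iteratedDeriv 2 g x| ≤ M) {h : ℝ} (hh : 0 < h) (t : ℝ) :
    |g t - conv g (chi h) t| ≤ h ^ 2 / 24 * M := by
  have hc : Continuous g := hg.continuous
  have hi1 : IntervalIntegrable (fun u => g (t + u)) volume (-h / 2) (h / 2) :=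
    (by fun_prop : Continuous fun u => g (t + u)).intervalIntegrable _ _
  have hi2 : IntervalIntegrable (fun u => g (t - u)) volume (-h / 2) (h / 2) :=
    (by fun_prop : Continuous fun u => g (t - u)).intervalIntegrable _ _
  have hrefl : ∫ u in (-h / 2)..(h / 2), g (t + u) = ∫ u in (-h / 2)..(h / 2), g (t - u) := by
    have := intervalIntegral.integral_comp_neg (a := -h / 2) (b := h / 2) (fun u => g (t - u))
    simpa [neg_div] using this
  have hint : ∫ u in (-h / 2)..(h / 2), (g (t + u) + g (t - u) - 2 * g t) =
      2 * (∫ u in (-h / 2)..(h / 2), g (t - u)) - 2 * h * g t := by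
    rw [intervalIntegral.integral_sub (hi1.add hi2) (by simp),
      intervalIntegral.integral_add hi1 hi2, hrefl, intervalIntegral.integral_const, smul_eq_mul]
    ring
  have hbound : |∫ u in (-h / 2)..(h / 2), (g (t + u) + g (t - u) - 2 * g t)| ≤
      M * h ^ 3 / 12 := by
    have h1 := intervalIntegral.norm_integral_le_of_norm_le (μ := volume)
      (a := -h / 2) (b := h / 2) (f := fun u => g (t + u) + g (t - u) - 2 * g t)
      (g := fun u => M * u ^ 2) (by linarith)
      (Filter.Eventually.of_forall fun u _ => abs_second_diff_le hg hM t u)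
      ((by fun_prop : Continuous fun u : ℝ => M * u ^ 2).intervalIntegrable _ _)
    refine h1.trans (le_of_eq ?_)
    rw [intervalIntegral.integral_const_mul, integral_pow]
    push_cast
    ring
  have hW : g t - conv g (chi h) t =
      -(1 / (2 * h)) * ∫ u in (-h / 2)..(h / 2), (g (t + u) + g (t - u) - 2 * g t) := by
    rw [hint, conv_chi g hh]
    field_simp
    ring
  rw [hW, abs_mul, abs_neg, abs_of_pos (by positivity)]
  calc 1 / (2 * h) * _ ≤ 1 / (2 * h) * (M * h ^ 3 / 12) := by gcongr
    _ = h ^ 2 / 24 * M := by field_simp; ring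

/-! ### Iterated averages -/

lemma integrable_chi (h : ℝ) : Integrable (chi h) := by
  have : chi h = (Set.Ioo (-h / 2) (h / 2)).indicator (fun _ => 1 / h) := by
    ext u
    simp [chi, Set.indicator_apply]
  rw [this]
  exact (integrable_indicator_iff measurableSet_Ioo).2 (by simp)

lemma conv_eq_convolution (f g : ℝ → ℝ) :
    conv f g = convolution f g (ContinuousLinearMap.mul ℝ ℝ) volume := rfl

lemma integrable_chiPow (h : ℝ) (n : ℕ) : Integrable (chiPow h (n + 1)) := by
  induction n with
  | zero => exact integrable_chi h
  | succ n ih => exact Integrable.integrable_convolution (ContinuousLinearMap.mul ℝ ℝ) ih (integrable_chi h)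

lemma bounded_convolutionExists {f p : ℝ → ℝ} (hf : Continuous f) {C : ℝ}
    (hC : ∀ x, |f x| ≤ C) (hp : Integrable p) (x : ℝ) :
    ConvolutionExistsAt f p x (ContinuousLinearMap.mul ℝ ℝ) volume :=
  (hp.comp_sub_left x).bdd_mul hf.aestronglyMeasurable (Filter.Eventually.of_forall hC)

/-- Associativity of convolution; it moves the last factor `χ_h` outside. Boundedness of `g` makes all the
convolutions with `g` converge everywhere. -/
lemma conv_chiPow_succ {g : ℝ → ℝ} (hg : Continuous g) {C : ℝ} (hC : ∀ x, |g x| ≤ C)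
    (h : ℝ) (n : ℕ) :
    conv g (chiPow h (n + 2)) = conv (conv g (chiPow h (n + 1))) (chi h) := by
  ext t
  have hp := integrable_chiPow h n
  have hq := integrable_chi h
  change conv g (conv (chiPow h (n + 1)) (chi h)) t = _
  simp only [conv_eq_convolution]
  symm
  refine convolution_assoc _ _ _ _ (fun x y z => mul_assoc x y z) hg.aestronglyMeasurable
    hp.aestronglyMeasurable hq.aestronglyMeasurable
    (Filter.Eventually.of_forall fun y => bounded_convolutionExists hg hC hp y)
    (hp.norm.ae_convolution_exists (ContinuousLinearMap.mul ℝ ℝ) hq.norm) ?_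
  exact bounded_convolutionExists hg.norm (C := C) (fun x => by simpa using hC x)
    (hp.norm.integrable_convolution (ContinuousLinearMap.mul ℝ ℝ) hq.norm) t

lemma abs_conv_chi_le {f : ℝ → ℝ} {C : ℝ} (hC : ∀ x, |f x| ≤ C) {h : ℝ} (hh : 0 < h) (t : ℝ) :
    |conv f (chi h) t| ≤ C := by
  rw [conv_chi f hh, abs_mul, abs_of_pos (by positivity)]
  have := intervalIntegral.norm_integral_le_of_norm_le_const (a := -h / 2) (b := h / 2)
    (f := fun u => f (t - u)) (C := C) (fun u _ => hC _)
  rw [show h / 2 - -h / 2 = h by ring, abs_of_pos hh, Real.norm_eq_abs] at this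
  calc 1 / h * _ ≤ 1 / h * (C * h) := by gcongr
    _ = C := by field_simp

/-- Induction on the exponent: each further factor `χ_h` adds one one-step error, because averaging
is a contraction in the sup norm. -/
lemma abs_sub_conv_chiPow_le {g : ℝ → ℝ} (hg : ContDiff ℝ 2 g) {C : ℝ} (hC : ∀ x, |g x| ≤ C)
    {M : ℝ} (hM : ∀ x, |iteratedDeriv 2 g x| ≤ M) {h : ℝ} (hh : 0 < h) (n : ℕ) :
    ∀ t, |g t - conv g (chiPow h (n + 1)) t| ≤ (n + 1 : ℝ) * h ^ 2 / 24 * M := by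
  induction n with
  | zero =>
    intro t
    simpa [chiPow] using abs_sub_conv_chi_le hg hM hh t
  | succ n ih =>
    intro t
    have hc := hg.continuous
    have hp := integrable_chiPow h n
    have hcont : Continuous (conv g (chiPow h (n + 1))) :=
      BddAbove.continuous_convolution_left_of_integrable (ContinuousLinearMap.mul ℝ ℝ)
        ⟨C, by rintro _ ⟨x, rfl⟩; exact hC x⟩ hc hp
    have hlin : conv g (chi h) t - conv (conv g (chiPow h (n + 1))) (chi h) t =
        conv (fun s => g s - conv g (chiPow h (n + 1)) s) (chi h) t := by
      rw [conv_chi _ hh, conv_chi _ hh, conv_chi _ hh, intervalIntegral.integral_sub]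
      · ring
      · exact (by fun_prop : Continuous fun u => g (t - u)).intervalIntegrable _ _
      · exact (hcont.comp (continuous_const.sub continuous_id)).intervalIntegrable _ _
    rw [conv_chiPow_succ hc hC]
    have h1 := abs_sub_conv_chi_le hg hM hh t
    have h2 := abs_conv_chi_le ih hh t
    rw [← hlin] at h2
    have h3 := abs_add_le (g t - conv g (chi h) t)
      (conv g (chi h) t - conv (conv g (chiPow h (n + 1))) (chi h) t)
    rw [sub_add_sub_cancel] at h3
    refine (h3.trans (add_le_add h1 h2)).trans (le_of_eq ?_)
    push_cast
    ring

/-- The periodicity keeps the supremum in `unorm` away from its junk value for unbounded sets. -/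
lemma abs_le_unorm {f : ℝ → ℝ} (hf : Continuous f) (hper : Function.Periodic f 1) (x : ℝ) :
    |f x| ≤ unorm f := by
  have hper' : Function.Periodic (fun u => |f u|) 1 := fun u => by simp only [hper u]
  exact le_ciSup (hper'.compact_of_continuous one_ne_zero hf.abs).bddAbove x

lemma periodic_deriv {f : ℝ → ℝ} (hf : Function.Periodic f 1) : Function.Periodic (deriv f) 1 := by
  intro x
  rw [← deriv_comp_add_const]
  congr 1
  exact funext hf

/-- Lemma 1, inequality (2.6): `W₂(g, χ_h^k) ≤ c_k(h)·‖D²g‖` with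
`c_k(h) = (2h²/(k+2)!)·Σ_{j=0}^{⌊k/2⌋} (-1)^j C(k,j) (k/2 - j)^{k+2}`. -/
theorem stmt13 (g : ℝ → ℝ) (hg : ContDiff ℝ 2 g) (hper : Function.Periodic g 1)
    (k : ℕ) (hk : 1 ≤ k) (h : ℝ) (hh : 0 < h) :
    W2 g h k ≤
      (2 * h^2 / (Nat.factorial (k+2)) *
        ∑ j ∈ Finset.range (k/2 + 1),
          (-1 : ℝ)^j * (Nat.choose k j) * ((k : ℝ)/2 - (j : ℝ))^(k+2)) *
      unorm (iteratedDeriv 2 g) := by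
  obtain ⟨n, rfl⟩ : ∃ n, k = n + 1 := ⟨k - 1, by omega⟩
  have hM : ∀ x, |iteratedDeriv 2 g x| ≤ unorm (iteratedDeriv 2 g) := by
    refine abs_le_unorm (hg.continuous_iteratedDeriv 2 le_rfl) ?_
    rw [iteratedDeriv_succ, iteratedDeriv_one]
    exact periodic_deriv (periodic_deriv hper)
  rw [const_eq]
  refine ciSup_le fun t => ?_
  push_cast
  exact abs_sub_conv_chiPow_le hg (abs_le_unorm hg.continuous hper) hM hh n t
end

section
/- Let f ∈ C(𝕋), h > 0, and define g(t) = (12/h²)·∫₀^h (f*χ_u²)(t)·u²·χ_h²(u) du. Then ‖f - g‖ ≤ W₂*(f, χ_h²). -/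
/-! The weight `u² χ_h²(u)` has integral `h² / 12` over `[0, h]` (`integral_weight`), so `f t - g t` is
the weighted average, with nonnegative weights of total mass one, of the differences
`f t - (f * χ_u²)(t)` for `0 < u ≤ h`. Each of these is at most `W₂(f, χ_u²) ≤ W₂*(f, χ_h²)` in
absolute value.

Two things need care. The average may be split because `u ↦ (f * χ_u²)(t)` is integrable: rescaling
gives `(f * χ_u²)(t) = ∫_{-1}^{1} f (t - u y) (1 - |y|) dy` (`conv_chiPow_two`), which is continuous
in `u`. And both suprema are suprema of bounded families, because the continuous periodic function
`f` is bounded, and so, by the same formula, are all the `f * χ_u²`.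
-/


open MeasureTheory Real

/-- `χ_h²` is the triangular kernel of height `1 / h` and support `[-h, h]`. -/
lemma chiPow_two {h : ℝ} (hh : 0 < h) (t : ℝ) :
    chiPow h 2 t = (1 / h) * max 0 (1 - |t| / h) := by
  -- The integrand of `χ_h * χ_h` is `1 / h²` on the overlap of two intervals of length `h`.
  have key : ∀ u : ℝ, chi h u * chi h (t - u) =
      (Set.Ioo (max (-h / 2) (t - h / 2)) (min (h / 2) (t + h / 2))).indicator
        (fun _ => 1 / h * (1 / h)) u := by
    intro u
    unfold chi Set.indicator
    simp only [Set.mem_Ioo, max_lt_iff, lt_min_iff]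
    split_ifs <;> first | (simp; done) | grind
  change ∫ u : ℝ, chi h u * chi h (t - u) = _
  simp_rw [key]
  rw [integral_indicator measurableSet_Ioo, setIntegral_const]
  simp only [Measure.real, Real.volume_Ioo, smul_eq_mul]
  have hlen : min (h / 2) (t + h / 2) - max (-h / 2) (t - h / 2) = h - |t| := by
    rcases le_total 0 t with ht | ht
    · rw [abs_of_nonneg ht, min_eq_left (by linarith), max_eq_right (by linarith)]; ring
    · rw [abs_of_nonpos ht, min_eq_right (by linarith), max_eq_left (by linarith)]; ring
  rw [hlen, ENNReal.toReal_ofReal', max_comm]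
  have hmax : max 0 (h - |t|) = h * max 0 (1 - |t| / h) := by
    rw [mul_max_of_nonneg _ _ hh.le]
    congr 1
    · simp
    · field_simp
  rw [hmax]
  field_simp

/-- Rescaling `x = u y` makes the dependence of `f * χ_u²` on `u` continuous, and turns the
convolution into an integral over an interval independent of `u`. -/
lemma conv_chiPow_two (f : ℝ → ℝ) {u : ℝ} (hu : 0 < u) (t : ℝ) :
    conv f (chiPow u 2) t = ∫ y in (-1 : ℝ)..1, f (t - u * y) * (1 - |y|) := by
  have h1 : conv f (chiPow u 2) t = ∫ x : ℝ, f (t - x) * chiPow u 2 x := by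
    unfold conv
    rw [← integral_sub_left_eq_self (fun x => f (t - x) * chiPow u 2 x) volume t]
    simp
  have h2 := Measure.integral_comp_mul_left (fun x => f (t - x) * chiPow u 2 x) u
  have h3 : ∀ y : ℝ, f (t - u * y) * chiPow u 2 (u * y) =
      u⁻¹ * (f (t - u * y) * max 0 (1 - |y|)) := by
    intro y
    rw [chiPow_two hu, abs_mul, abs_of_pos hu, mul_div_cancel_left₀ _ hu.ne']
    ring
  simp only [h3] at h2
  rw [integral_const_mul, smul_eq_mul, abs_of_pos (inv_pos.2 hu)] at h2
  rw [h1, ← mul_left_cancel₀ (inv_pos.2 hu).ne' h2,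
    intervalIntegral.integral_of_le (by norm_num),
    ← setIntegral_eq_integral_of_forall_compl_eq_zero (s := Set.Ioc (-1 : ℝ) 1)]
  · refine setIntegral_congr_fun measurableSet_Ioc fun y hy => ?_
    have : |y| ≤ 1 := abs_le.2 ⟨hy.1.le, hy.2⟩
    rw [max_eq_right (by linarith)]
  · intro y hy
    have : 1 ≤ |y| := by
      by_contra! hc
      exact hy ⟨(abs_lt.1 hc).1, (abs_lt.1 hc).2.le⟩
    rw [max_eq_left (by linarith), mul_zero]

lemma continuous_rescaled {f : ℝ → ℝ} (hf : Continuous f) (t : ℝ) :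
    Continuous fun u : ℝ => ∫ y in (-1 : ℝ)..1, f (t - u * y) * (1 - |y|) :=
  intervalIntegral.continuous_parametric_intervalIntegral_of_continuous' (by fun_prop) _ _

/-- The crude bound `2 M`, instead of the sharp `M`, is enough for boundedness. -/
lemma abs_rescaled_le {f : ℝ → ℝ} {M : ℝ} (hM : ∀ x, |f x| ≤ M) (t u : ℝ) :
    |∫ y in (-1 : ℝ)..1, f (t - u * y) * (1 - |y|)| ≤ M * 2 := by
  have := intervalIntegral.norm_integral_le_of_norm_le_const (a := (-1 : ℝ)) (b := 1)
    (f := fun y => f (t - u * y) * (1 - |y|)) (C := M) ?_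
  · norm_num at this ⊢
    exact this
  · intro y hy
    rw [Set.uIoc_of_le (by norm_num)] at hy
    have hy1 : |y| ≤ 1 := abs_le.2 ⟨hy.1.le, hy.2⟩
    rw [Real.norm_eq_abs, abs_mul, abs_of_nonneg (by linarith : 0 ≤ 1 - |y|)]
    nlinarith [hM (t - u * y), abs_nonneg y, abs_nonneg (f (t - u * y))]

lemma exists_abs_le {f : ℝ → ℝ} (hf : Continuous f) (hper : Function.Periodic f 1) :
    ∃ M, ∀ x, |f x| ≤ M := by
  obtain ⟨M, hM⟩ := isCompact_Icc.exists_bound_of_continuousOn (s := Set.Icc (0 : ℝ) 1)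
    hf.continuousOn
  refine ⟨M, fun x => ?_⟩
  obtain ⟨y, hy, hxy⟩ := hper.exists_mem_Ico₀ one_pos x
  rw [hxy]
  exact hM y ⟨hy.1, hy.2.le⟩

lemma abs_sub_conv_le_W2star {f : ℝ → ℝ} (hf : Continuous f) (hper : Function.Periodic f 1)
    {h u : ℝ} (hu : 0 < u) (huh : u ≤ h) (t : ℝ) :
    |f t - conv f (chiPow u 2) t| ≤ W2star f h 2 := by
  obtain ⟨M, hM⟩ := exists_abs_le hf hper
  have hb : ∀ v : ℝ, 0 < v → ∀ s : ℝ, |f s - conv f (chiPow v 2) s| ≤ M + M * 2 := by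
    intro v hv s
    rw [conv_chiPow_two f hv]
    exact (abs_sub _ _).trans (add_le_add (hM s) (abs_rescaled_le hM s v))
  calc |f t - conv f (chiPow u 2) t| ≤ W2 f u 2 :=
        le_ciSup (f := fun s => |f s - conv f (chiPow u 2) s|)
          ⟨_, Set.forall_mem_range.2 (hb u hu)⟩ t
    _ ≤ W2star f h 2 :=
        le_ciSup (f := fun v : Set.Ioc (0 : ℝ) h => W2 f v.1 2)
          ⟨_, Set.forall_mem_range.2 fun v => ciSup_le (hb v.1 v.2.1)⟩ ⟨u, hu, huh⟩

lemma integral_weight {h : ℝ} (hh : 0 < h) :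
    ∫ u in (0 : ℝ)..h, u ^ 2 * (1 / h * (1 - u / h)) = h ^ 2 / 12 := by
  have h1 : ∀ u : ℝ, u ^ 2 * (1 / h * (1 - u / h)) = 1 / h * u ^ 2 - 1 / h ^ 2 * u ^ 3 := by
    intro u; field_simp
  simp only [h1]
  rw [intervalIntegral.integral_sub (Continuous.intervalIntegrable (by fun_prop) _ _)
    (Continuous.intervalIntegrable (by fun_prop) _ _)]
  simp only [intervalIntegral.integral_const_mul, integral_pow]
  field_simp
  ring

/-- Estimate (3.5): for `g(t) = (12/h²)·∫₀^h (f*χ_u²)(t)·u²·χ_h²(u) du`,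
we have `‖f - g‖ ≤ W₂*(f, χ_h²)`. -/
theorem stmt18 (f : ℝ → ℝ) (hf : Continuous f) (hper : Function.Periodic f 1)
    (h : ℝ) (hh : 0 < h) (g : ℝ → ℝ)
    (hg : ∀ t : ℝ, g t =
      (12 / h^2) * ∫ u in (0:ℝ)..h, conv f (chiPow u 2) t * u^2 * chiPow h 2 u) :
    unorm (fun t => f t - g t) ≤ W2star f h 2 := by
  refine ciSup_le fun t => ?_
  set G : ℝ → ℝ := fun u => ∫ y in (-1 : ℝ)..1, f (t - u * y) * (1 - |y|) with hG
  have hGc : Continuous G := continuous_rescaled hf t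
  set w : ℝ → ℝ := fun u => u ^ 2 * (1 / h * (1 - u / h)) with hw
  have hwc : Continuous w := by fun_prop
  have hw12 : ∫ u in (0 : ℝ)..h, w u = h ^ 2 / 12 := integral_weight hh
  have hgt : g t = (12 / h ^ 2) * ∫ u in (0 : ℝ)..h, G u * w u := by
    rw [hg t]
    congr 1
    rw [intervalIntegral.integral_of_le hh.le, intervalIntegral.integral_of_le hh.le]
    refine setIntegral_congr_fun measurableSet_Ioc fun u hu => ?_
    have hu1 : u / h ≤ 1 := (div_le_one hh).2 hu.2
    simp only [hw, hG]
    rw [conv_chiPow_two f hu.1, chiPow_two hh, abs_of_pos hu.1, max_eq_right (by linarith)]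
    ring
  have hdiff : f t - g t = (12 / h ^ 2) * ∫ u in (0 : ℝ)..h, (f t - G u) * w u := by
    simp only [sub_mul]
    rw [hgt, intervalIntegral.integral_sub
      (Continuous.intervalIntegrable (by fun_prop) _ _)
      (Continuous.intervalIntegrable (by fun_prop) _ _),
      intervalIntegral.integral_const_mul, hw12]
    field_simp
  have hbound : |∫ u in (0 : ℝ)..h, (f t - G u) * w u| ≤ W2star f h 2 * (h ^ 2 / 12) := by
    rw [← hw12, ← intervalIntegral.integral_const_mul, ← Real.norm_eq_abs]
    have hint : IntervalIntegrable (fun u => W2star f h 2 * w u) volume 0 h :=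
      (continuous_const.mul hwc).intervalIntegrable _ _
    refine intervalIntegral.norm_integral_le_of_norm_le hh.le
      (Filter.Eventually.of_forall fun u hu => ?_) hint
    have hu1 : u / h ≤ 1 := (div_le_one hh).2 hu.2
    have hw0 : 0 ≤ w u :=
      mul_nonneg (sq_nonneg u) (mul_nonneg (by positivity) (by linarith))
    rw [Real.norm_eq_abs, abs_mul, abs_of_nonneg hw0]
    refine mul_le_mul_of_nonneg_right ?_ hw0
    have := abs_sub_conv_le_W2star hf hper hu.1 hu.2 t
    rwa [conv_chiPow_two f hu.1] at this
  calc |f t - g t| = (12 / h ^ 2) * |∫ u in (0 : ℝ)..h, (f t - G u) * w u| := by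
        rw [hdiff, abs_mul, abs_of_pos (by positivity)]
    _ ≤ (12 / h ^ 2) * (W2star f h 2 * (h ^ 2 / 12)) := by gcongr
    _ = W2star f h 2 := by field_simp
end
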